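/- arXiv:2108.02420 — 2 statements merged into one kernel-verified Lean document; each statement's English description precedes it below -/
import Mathlib

section
/- Let $n_a, n_b$ be natural numbers, let $d$ be a norm on $\mathbb{R}^{n_a}$, let $F$ be a time-dependent vector field on $\mathbb{R}^{n_a} \times \mathbb{R}^{n_b}$ depending only on the $b$-component of the state (i.e. $F((x_a,x_b),t) = G(x_b,t)$ with $x_b \mapsto (G(x_b,t))_b$ Lipschitz uniformly in $t$ and continuous in $t$). Let $x_{\mathcal{H}}, x_1, \dots, x_m : \mathbb{R} \to \mathbb{R}^{n_a} \times \mathbb{R}^{n_b}$ all be solutions of $\dot{x}(t) = F(x(t),t)$ on $[t_0,\infty)$ (a cluster center and the vehicles in the cluster, all applying the same control), with $(x_{\mathcal{H}}(t_0))_b = (x_i(t_0))_b$ for all $i = 1, \dots, m$. Then the maximum vehicle distance to the cluster center, $R_{\mathcal{H}}(t) = \max_{1 \le i \le m} d\big((x_{\mathcal{H}}(t))_a - (x_i(t))_a\big)$, is constant in $t$ on $[t_0,\infty)$: $R_{\mathcal{H}}(t) = R_{\mathcal{H}}(t_0)$ for all $t \ge t_0$. -/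
/-!
The `b`-components of the center and of the vehicles solve one Lipschitz ODE with the same initial
value, so they coincide at all later times. The velocities depend only on the `b`-component, so the
`a`-components move with a common velocity and their differences are constant.
-/

open Set

section Deriv

variable {𝕜 E F : Type*} [NormedAddCommGroup E] [NormedAddCommGroup F]

theorem hasDerivWithinAt_fst [NontriviallyNormedField 𝕜] [NormedSpace 𝕜 E] [NormedSpace 𝕜 F]
    {f : 𝕜 → E × F} {f' : E × F} {s : Set 𝕜} {x : 𝕜} (hf : HasDerivWithinAt f f' s x) :
    HasDerivWithinAt (fun y ↦ (f y).1) f'.1 s x :=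
  (ContinuousLinearMap.fst 𝕜 E F).hasFDerivAt.comp_hasDerivWithinAt x hf

theorem hasDerivWithinAt_snd [NontriviallyNormedField 𝕜] [NormedSpace 𝕜 E] [NormedSpace 𝕜 F]
    {f : 𝕜 → E × F} {f' : E × F} {s : Set 𝕜} {x : 𝕜} (hf : HasDerivWithinAt f f' s x) :
    HasDerivWithinAt (fun y ↦ (f y).2) f'.2 s x :=
  (ContinuousLinearMap.snd 𝕜 E F).hasFDerivAt.comp_hasDerivWithinAt x hf

theorem sub_eq_sub_of_hasDerivWithinAt_eq [RCLike 𝕜] [NormedSpace 𝕜 E] {f g f' : 𝕜 → E}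
    {s : Set 𝕜} (hs : Convex ℝ s) (hf : ∀ x ∈ s, HasDerivWithinAt f (f' x) s x)
    (hg : ∀ x ∈ s, HasDerivWithinAt g (f' x) s x) {x y : 𝕜} (hx : x ∈ s) (hy : y ∈ s) :
    f x - g x = f y - g y := by
  have hderiv : ∀ z ∈ s, HasDerivWithinAt (fun r ↦ f r - g r) 0 s z := fun z hz ↦ by
    simpa only [sub_self] using (hf z hz).fun_sub (hg z hz)
  have hbound := hs.norm_image_sub_le_of_norm_hasDerivWithin_le hderiv
    (fun _ _ ↦ norm_zero.le) hy hx
  simpa only [zero_mul, norm_le_zero_iff, sub_eq_zero] using hbound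

end Deriv

section IntegralCurve

variable {A B : Type*} [NormedAddCommGroup B] [NormedSpace ℝ B] {K : NNReal} {t₀ : ℝ}

theorem eqOn_Ici_of_isIntegralCurveOn {v : ℝ → B → B} {γ η : ℝ → B}
    (hv : ∀ t ≥ t₀, LipschitzWith K (v t)) (hγ : IsIntegralCurveOn γ v (Ici t₀))
    (hη : IsIntegralCurveOn η v (Ici t₀)) (h₀ : γ t₀ = η t₀) : EqOn γ η (Ici t₀) := by
  intro t ht
  have hright {ξ : ℝ → B} (hξ : IsIntegralCurveOn ξ v (Ici t₀)) :
      ∀ s ∈ Ico t₀ t, HasDerivWithinAt ξ (v s (ξ s)) (Ici s) s :=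
    fun s hs ↦ (hξ s hs.1).mono (Ici_subset_Ici.mpr hs.1)
  exact ODE_solution_unique_of_mem_Icc_right (s := fun _ ↦ univ)
    (fun s hs ↦ (hv s hs.1).lipschitzOnWith)
    (hγ.continuousOn.mono Icc_subset_Ici_self) (hright hγ) (fun _ _ ↦ mem_univ _)
    (hη.continuousOn.mono Icc_subset_Ici_self) (hright hη) (fun _ _ ↦ mem_univ _)
    h₀ (right_mem_Icc.mpr ht)

variable [NormedAddCommGroup A] [NormedSpace ℝ A] {w : ℝ → B → A × B} {γ η : ℝ → A × B}

theorem isIntegralCurveOn_snd {s : Set ℝ} (hγ : IsIntegralCurveOn γ (fun t x ↦ w t x.2) s) :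
    IsIntegralCurveOn (fun t ↦ (γ t).2) (fun t b ↦ (w t b).2) s :=
  fun t ht ↦ hasDerivWithinAt_snd (hγ t ht)

theorem fst_sub_fst_eq_of_isIntegralCurveOn (hw : ∀ t ≥ t₀, LipschitzWith K fun b ↦ (w t b).2)
    (hγ : IsIntegralCurveOn γ (fun t x ↦ w t x.2) (Ici t₀))
    (hη : IsIntegralCurveOn η (fun t x ↦ w t x.2) (Ici t₀))
    (h₀ : (γ t₀).2 = (η t₀).2) {t : ℝ} (ht : t₀ ≤ t) :
    (γ t).1 - (η t).1 = (γ t₀).1 - (η t₀).1 := by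
  have hsnd : EqOn (fun s ↦ (γ s).2) (fun s ↦ (η s).2) (Ici t₀) :=
    eqOn_Ici_of_isIntegralCurveOn hw (isIntegralCurveOn_snd hγ) (isIntegralCurveOn_snd hη) h₀
  have hγ_fst : ∀ s ∈ Ici t₀,
      HasDerivWithinAt (fun r ↦ (γ r).1) (w s (γ s).2).1 (Ici t₀) s :=
    fun s hs ↦ hasDerivWithinAt_fst (hγ s hs)
  have hη_fst : ∀ s ∈ Ici t₀,
      HasDerivWithinAt (fun r ↦ (η r).1) (w s (γ s).2).1 (Ici t₀) s := fun s hs ↦ by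
    rw [show (γ s).2 = (η s).2 from hsnd hs]
    exact hasDerivWithinAt_fst (hη s hs)
  exact sub_eq_sub_of_hasDerivWithinAt_eq (convex_Ici t₀) hγ_fst hη_fst ht self_mem_Ici

theorem cluster_radius_constant_general {ι α : Type*} [SemilatticeSup α] (d : A → α)
    {c : ℝ → A × B} {x : ι → ℝ → A × B} {I : Finset ι} (hI : I.Nonempty)
    (hw : ∀ t ≥ t₀, LipschitzWith K fun b ↦ (w t b).2)
    (hc : IsIntegralCurveOn c (fun t z ↦ w t z.2) (Ici t₀))
    (hx : ∀ i ∈ I, IsIntegralCurveOn (x i) (fun t z ↦ w t z.2) (Ici t₀))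
    (h₀ : ∀ i ∈ I, (c t₀).2 = (x i t₀).2) {t : ℝ} (ht : t₀ ≤ t) :
    (I.sup' hI fun i ↦ d ((c t).1 - (x i t).1)) =
      I.sup' hI fun i ↦ d ((c t₀).1 - (x i t₀).1) :=
  Finset.sup'_congr hI rfl fun i hi ↦
    congrArg d (fst_sub_fst_eq_of_isIntegralCurveOn hw hc (hx i hi) (h₀ i hi) ht)

end IntegralCurve

/-- If the cluster center and all vehicles of a cluster follow the same dynamics,
which depend only on the `b`-component of the state, and all start with equal
`b`-components, then the maximum vehicle distance to the cluster center is
constant in time. -/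
theorem cluster_radius_constant (na nb m : ℕ) (hm : 0 < m)
    (d : Seminorm ℝ (Fin na → ℝ)) (hd : ∀ z : Fin na → ℝ, d z = 0 → z = 0)
    (F : (Fin na → ℝ) × (Fin nb → ℝ) → ℝ → (Fin na → ℝ) × (Fin nb → ℝ))
    (G : (Fin nb → ℝ) → ℝ → (Fin na → ℝ) × (Fin nb → ℝ))
    (hFG : ∀ (xa : Fin na → ℝ) (xb : Fin nb → ℝ) (t : ℝ), F (xa, xb) t = G xb t)
    (L : NNReal)
    (hLip : ∀ t : ℝ, LipschitzWith L fun xb => (G xb t).2)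
    (hCont : ∀ xb : Fin nb → ℝ, Continuous fun t => (G xb t).2)
    (t0 : ℝ)
    (xH : ℝ → (Fin na → ℝ) × (Fin nb → ℝ))
    (x : Fin m → ℝ → (Fin na → ℝ) × (Fin nb → ℝ))
    (hxH : ∀ t ≥ t0, HasDerivAt xH (F (xH t) t) t)
    (hx : ∀ i : Fin m, ∀ t ≥ t0, HasDerivAt (x i) (F (x i t) t) t)
    (hb0 : ∀ i : Fin m, (xH t0).2 = (x i t0).2) :
    ∀ t ≥ t0,
      (Finset.univ.sup' (Finset.univ_nonempty_iff.mpr ⟨⟨0, hm⟩⟩)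
          fun i : Fin m => d ((xH t).1 - (x i t).1)) =
        Finset.univ.sup' (Finset.univ_nonempty_iff.mpr ⟨⟨0, hm⟩⟩)
          fun i : Fin m => d ((xH t0).1 - (x i t0).1) := by
  obtain rfl : F = fun z t ↦ G z.2 t := funext₂ fun z t ↦ hFG z.1 z.2 t
  exact fun t ↦ cluster_radius_constant_general (w := fun t b ↦ G b t) d _ (fun s _ ↦ hLip s)
    (fun s hs ↦ (hxH s hs).hasDerivWithinAt) (fun i _ s hs ↦ (hx i s hs).hasDerivWithinAt)
    fun i _ ↦ hb0 i
end

section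
/- Consider six $\{0,1\}$-valued variables $p_{12}, p_{13}, p_{21}, p_{23}, p_{31}, p_{32}$ subject to the pairwise constraints $p_{12} + p_{21} \le 1$, $p_{13} + p_{31} \le 1$, $p_{23} + p_{32} \le 1$ and the row constraints $p_{12} + p_{13} \le 1$, $p_{21} + p_{23} \le 1$, $p_{31} + p_{32} \le 1$ (the feasible set of the three-vehicle ILP), and real coefficients $c_{12}, c_{13}, c_{21}, c_{23}, c_{31}, c_{32}$. Suppose $c_{12} > c_{13}^+ + c_{21}^+ + c_{32}^+$, where $r^+ = \max(r,0)$, and suppose $c_{23} < 0$ and $c_{31} < 0$. Then every maximizer of the objective $\sum_{i \ne j} c_{ij} p_{ij}$ over the feasible set satisfies $p_{12} = 1$. -/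
/-!
Exchange argument: letting vehicle 1 avoid vehicle 2 only forces `p13 = 0` (row constraint) and
`p21 = 0` (pairwise constraint), and every other decision can be kept. The objective gains `c12`
and loses at most the positive parts of `c13` and `c21`, so no assignment with `p12 = 0` is optimal.
-/

/-- The feasible set of the three-vehicle ILP. -/
def ILPFeasible (p12 p13 p21 p23 p31 p32 : ℝ) : Prop :=
  (p12 = 0 ∨ p12 = 1) ∧ (p13 = 0 ∨ p13 = 1) ∧ (p21 = 0 ∨ p21 = 1) ∧
    (p23 = 0 ∨ p23 = 1) ∧ (p31 = 0 ∨ p31 = 1) ∧ (p32 = 0 ∨ p32 = 1) ∧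
    p12 + p21 ≤ 1 ∧ p13 + p31 ≤ 1 ∧ p23 + p32 ≤ 1 ∧
    p12 + p13 ≤ 1 ∧ p21 + p23 ≤ 1 ∧ p31 + p32 ≤ 1

/-- The linear objective of the three-vehicle ILP. -/
def ILPObj (c12 c13 c21 c23 c31 c32 p12 p13 p21 p23 p31 p32 : ℝ) : ℝ :=
  c12 * p12 + c13 * p13 + c21 * p21 + c23 * p23 + c31 * p31 + c32 * p32

section Binary

variable {R : Type*} [Semiring R] [LinearOrder R] [IsOrderedRing R] {c p : R}

theorem mem_Icc_zero_one_of_eq_zero_or_eq_one (hp : p = 0 ∨ p = 1) : p ∈ Set.Icc 0 1 := by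
  rcases hp with rfl | rfl <;> simp

theorem mul_le_max_zero_of_mem_Icc (hp : p ∈ Set.Icc 0 1) : c * p ≤ max c 0 :=
  calc
    c * p ≤ max c 0 * p := mul_le_mul_of_nonneg_right (le_max_left c 0) hp.1
    _ ≤ max c 0 := mul_le_of_le_one_right (le_max_right c 0) hp.2

end Binary

theorem ILPFeasible.exchange {p12 p13 p21 p23 p31 p32 : ℝ}
    (hp : ILPFeasible p12 p13 p21 p23 p31 p32) : ILPFeasible 1 0 0 p23 p31 p32 := by
  obtain ⟨-, -, -, h23, h31, h32, -, -, pair23, -, -, row3⟩ := hp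
  have p23_le : p23 ≤ 1 := (mem_Icc_zero_one_of_eq_zero_or_eq_one h23).2
  have p31_le : p31 ≤ 1 := (mem_Icc_zero_one_of_eq_zero_or_eq_one h31).2
  exact ⟨.inr rfl, .inl rfl, .inl rfl, h23, h31, h32,
    by simp, by simpa using p31_le, pair23, by simp, by simpa using p23_le, row3⟩

theorem ILPObj_exchange (c12 c13 c21 c23 c31 c32 p12 p13 p21 p23 p31 p32 : ℝ) :
    ILPObj c12 c13 c21 c23 c31 c32 1 0 0 p23 p31 p32 =
      ILPObj c12 c13 c21 c23 c31 c32 p12 p13 p21 p23 p31 p32 +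
        (c12 * (1 - p12) - (c13 * p13 + c21 * p21)) := by
  unfold ILPObj
  ring

theorem ilp_one_conflict_general (c12 c13 c21 c23 c31 c32 : ℝ)
    (hc12 : c12 > max c13 0 + max c21 0)
    (p12 p13 p21 p23 p31 p32 : ℝ)
    (hfeas : ILPFeasible p12 p13 p21 p23 p31 p32)
    (hmax : ∀ q12 q13 q21 q23 q31 q32 : ℝ, ILPFeasible q12 q13 q21 q23 q31 q32 →
      ILPObj c12 c13 c21 c23 c31 c32 q12 q13 q21 q23 q31 q32 ≤
        ILPObj c12 c13 c21 c23 c31 c32 p12 p13 p21 p23 p31 p32) :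
    p12 = 1 := by
  have gain_nonpos : c12 * (1 - p12) - (c13 * p13 + c21 * p21) ≤ 0 := by
    have h := hmax _ _ _ _ _ _ hfeas.exchange
    rwa [ILPObj_exchange c12 c13 c21 c23 c31 c32 p12 p13 p21, add_le_iff_nonpos_right] at h
  obtain ⟨h12, h13, h21, -⟩ := hfeas
  refine h12.resolve_left fun p12_eq_zero => hc12.not_ge ?_
  calc
    c12 ≤ c13 * p13 + c21 * p21 := by simpa [p12_eq_zero] using gain_nonpos
    _ ≤ max c13 0 + max c21 0 :=
      add_le_add (mul_le_max_zero_of_mem_Icc (mem_Icc_zero_one_of_eq_zero_or_eq_one h13))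
        (mul_le_max_zero_of_mem_Icc (mem_Icc_zero_one_of_eq_zero_or_eq_one h21))

/-- Case of Theorem 3 in which only the pair (1,2) is in potential conflict:
every maximizer of the ILP has `p12 = 1`. -/
theorem ilp_one_conflict (c12 c13 c21 c23 c31 c32 : ℝ)
    (hc12 : c12 > max c13 0 + max c21 0 + max c32 0)
    (hc23 : c23 < 0)
    (hc31 : c31 < 0)
    (p12 p13 p21 p23 p31 p32 : ℝ)
    (hfeas : ILPFeasible p12 p13 p21 p23 p31 p32)
    (hmax : ∀ q12 q13 q21 q23 q31 q32 : ℝ, ILPFeasible q12 q13 q21 q23 q31 q32 →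
      ILPObj c12 c13 c21 c23 c31 c32 q12 q13 q21 q23 q31 q32 ≤
        ILPObj c12 c13 c21 c23 c31 c32 p12 p13 p21 p23 p31 p32) :
    p12 = 1 := by
  exact ilp_one_conflict_general c12 c13 c21 c23 c31 c32
    ((le_add_of_nonneg_right (le_max_right c32 0)).trans_lt hc12)
    p12 p13 p21 p23 p31 p32 hfeas hmax
end
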